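/- arXiv:1711.03835 — 3 statements merged into one kernel-verified Lean document; each statement's English description precedes it below -/
import Mathlib

section
/- Let ψ = |ψ⟩⟨ψ| be a bipartite pure state on ℂ^{d_A} ⊗ ℂ^{d_B} with largest Schmidt coefficient λ₁. Then the maximum of Tr(ψσ) over all separable states σ on ℂ^{d_A} ⊗ ℂ^{d_B} equals λ₁, and the maximum is attained (e.g. by the product state |1⟩⟨1| ⊗ |1⟩⟨1| in a Schmidt basis of |ψ⟩). -/
/-! For a product vector `x ⊗ y`, the overlap of `∑ᵢ cᵢ aᵢ ⊗ bᵢ` with `x ⊗ y` is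
`∑ᵢ c̄ᵢ ⟪aᵢ, x⟫ ⟪bᵢ, y⟫`. By the Cauchy–Schwarz inequality in `i` and Bessel's inequality for `a`
and for `b`, its squared modulus is at most `maxᵢ |cᵢ|² ‖x‖² ‖y‖²`. Hence `W = maxᵢ |cᵢ|² • 1 - ψ`
is an entanglement witness: it is nonnegative on product vectors, so `Tr (W σ) ≥ 0` for every
separable `σ`. Equality holds at `σ = |a_k ⊗ b_k⟩⟨a_k ⊗ b_k|` when `|c_k|` is maximal. -/

open Matrix BigOperators
open scoped Kronecker ComplexOrder

noncomputable section

/-- A positive semidefinite operator on a bipartite space is separable if it is a finite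
sum of Kronecker products of positive semidefinite operators. -/
def SepOp {A B : Type*} [Fintype A] [Fintype B] [DecidableEq A] [DecidableEq B]
    (X : Matrix (A × B) (A × B) ℂ) : Prop :=
  ∃ (N : ℕ) (τ : Fin N → Matrix A A ℂ) (ω : Fin N → Matrix B B ℂ),
    (∀ i, (τ i).PosSemidef) ∧ (∀ i, (ω i).PosSemidef) ∧ X = ∑ i, τ i ⊗ₖ ω i

/-- The rank-one density operator `|v⟩⟨v|` associated to a vector `v`. -/
def pureState {n : Type*} (v : n → ℂ) : Matrix n n ℂ :=
  Matrix.of fun i j => v i * star (v j)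

/-- `v` has Schmidt coefficients `lam`: it admits a Schmidt decomposition with orthonormal
local bases and coefficients `√(lam i)`. -/
def HasSchmidtCoeffs {dA dB d : ℕ} (v : Fin dA × Fin dB → ℂ) (lam : Fin d → ℝ) : Prop :=
  ∃ (a : Fin d → EuclideanSpace ℂ (Fin dA)) (b : Fin d → EuclideanSpace ℂ (Fin dB)),
    Orthonormal ℂ a ∧ Orthonormal ℂ b ∧ (∀ i, 0 ≤ lam i) ∧
    ∀ p : Fin dA × Fin dB, v p = ∑ i, (Real.sqrt (lam i) : ℂ) * a i p.1 * b i p.2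

/-- The tensor product `x ⊗ y` of two vectors given by their coordinates, in the index convention
of the Kronecker product of matrices. -/
def productVector {A B R : Type*} [Mul R] (x : A → R) (y : B → R) : A × B → R :=
  fun p => x p.1 * y p.2

/-- A matrix on a bipartite space is block positive if its quadratic form is nonnegative on product
vectors. This is the condition dual to separability. -/
def IsBlockPositive {A B : Type*} [Fintype A] [Fintype B] (W : Matrix (A × B) (A × B) ℂ) : Prop :=
  ∀ (x : A → ℂ) (y : B → ℂ), 0 ≤ star (productVector x y) ⬝ᵥ W *ᵥ productVector x y

section ProductVector

variable {A B R : Type*}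

lemma star_productVector [CommSemigroup R] [StarMul R] (x : A → R) (y : B → R) :
    star (productVector x y) = productVector (star x) (star y) :=
  funext fun _ => star_mul' _ _

lemma productVector_dotProduct_productVector [Fintype A] [Fintype B] [NonUnitalCommSemiring R]
    (x x' : A → R) (y y' : B → R) :
    productVector x y ⬝ᵥ productVector x' y' = (x ⬝ᵥ x') * (y ⬝ᵥ y') := by
  simp only [dotProduct, productVector, Fintype.sum_prod_type, Finset.sum_mul_sum,
    mul_mul_mul_comm]

lemma vecMulVec_kronecker_vecMulVec {A' B' : Type*} [CommSemigroup R]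
    (w : A → R) (x : A' → R) (y : B → R) (z : B' → R) :
    vecMulVec w x ⊗ₖ vecMulVec y z = vecMulVec (productVector w y) (productVector x z) :=
  Matrix.ext fun _ _ => mul_mul_mul_comm _ _ _ _

end ProductVector

lemma sum_kronecker_sum {ι κ l m n p R : Type*} [NonUnitalNonAssocSemiring R]
    (s : Finset ι) (t : Finset κ) (f : ι → Matrix l m R) (g : κ → Matrix n p R) :
    (∑ i ∈ s, f i) ⊗ₖ (∑ j ∈ t, g j) = ∑ i ∈ s, ∑ j ∈ t, f i ⊗ₖ g j := by
  ext
  simp only [kroneckerMap_apply, Matrix.sum_apply, Finset.sum_mul_sum]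

lemma trace_mul_vecMulVec {m n R : Type*} [Fintype m] [Fintype n] [NonUnitalCommSemiring R]
    (M : Matrix m n R) (x : n → R) (y : m → R) :
    (M * vecMulVec x y).trace = y ⬝ᵥ M *ᵥ x := by
  rw [mul_vecMulVec, trace_vecMulVec, dotProduct_comm]

section PureState

lemma pureState_eq_vecMulVec {n : Type*} (v : n → ℂ) : pureState v = vecMulVec v (star v) := rfl

lemma posSemidef_pureState {n : Type*} [Finite n] (v : n → ℂ) : (pureState v).PosSemidef :=
  posSemidef_vecMulVec_self_star v

lemma pureState_kronecker_pureState {A B : Type*} (x : A → ℂ) (y : B → ℂ) :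
    pureState x ⊗ₖ pureState y = pureState (productVector x y) := by
  simp only [pureState_eq_vecMulVec, vecMulVec_kronecker_vecMulVec, star_productVector]

variable {n : Type*} [Fintype n]

lemma trace_mul_pureState (M : Matrix n n ℂ) (v : n → ℂ) :
    (M * pureState v).trace = star v ⬝ᵥ M *ᵥ v :=
  trace_mul_vecMulVec M v (star v)

lemma dotProduct_star_self_eq_norm_sq (x : n → ℂ) :
    x ⬝ᵥ star x = (‖WithLp.toLp 2 x‖ ^ 2 : ℝ) := by
  rw [← EuclideanSpace.inner_toLp_toLp, inner_self_eq_norm_sq_to_K]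
  push_cast
  rfl

lemma trace_pureState (x : n → ℂ) : (pureState x).trace = (‖WithLp.toLp 2 x‖ ^ 2 : ℝ) := by
  rw [pureState_eq_vecMulVec, trace_vecMulVec, dotProduct_star_self_eq_norm_sq]

lemma star_dotProduct_pureState_mulVec (v z : n → ℂ) :
    star z ⬝ᵥ pureState v *ᵥ z = (‖star v ⬝ᵥ z‖ ^ 2 : ℝ) := by
  have hconj : star z ⬝ᵥ v = star (star v ⬝ᵥ z) := by rw [star_dotProduct]
  rw [pureState_eq_vecMulVec, vecMulVec_mulVec, op_smul_eq_smul, dotProduct_smul, hconj,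
    smul_eq_mul, Complex.star_def, Complex.mul_conj', Complex.ofReal_pow]

end PureState

section Separable

variable {A B : Type*} [Fintype A] [Fintype B]

lemma sepOp_kronecker [DecidableEq A] [DecidableEq B] {τ : Matrix A A ℂ} {ω : Matrix B B ℂ}
    (hτ : τ.PosSemidef) (hω : ω.PosSemidef) : SepOp (τ ⊗ₖ ω) :=
  ⟨1, fun _ => τ, fun _ => ω, fun _ => hτ, fun _ => hω, by rw [Fin.sum_univ_one]⟩

lemma IsBlockPositive.trace_mul_kronecker_nonneg {W : Matrix (A × B) (A × B) ℂ}
    (hW : IsBlockPositive W) {τ : Matrix A A ℂ} {ω : Matrix B B ℂ}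
    (hτ : τ.PosSemidef) (hω : ω.PosSemidef) : 0 ≤ (W * (τ ⊗ₖ ω)).trace := by
  obtain ⟨_, x, rfl⟩ := posSemidef_iff_eq_sum_vecMulVec.mp hτ
  obtain ⟨_, y, rfl⟩ := posSemidef_iff_eq_sum_vecMulVec.mp hω
  simp only [sum_kronecker_sum, Finset.mul_sum, trace_sum, ← pureState_eq_vecMulVec,
    pureState_kronecker_pureState, trace_mul_pureState]
  exact Finset.sum_nonneg fun i _ => Finset.sum_nonneg fun j _ => hW (x i) (y j)

lemma IsBlockPositive.trace_mul_nonneg [DecidableEq A] [DecidableEq B]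
    {W σ : Matrix (A × B) (A × B) ℂ} (hW : IsBlockPositive W) (hσ : SepOp σ) :
    0 ≤ (W * σ).trace := by
  obtain ⟨N, τ, ω, hτ, hω, rfl⟩ := hσ
  rw [Finset.mul_sum, trace_sum]
  exact Finset.sum_nonneg fun i _ => hW.trace_mul_kronecker_nonneg (hτ i) (hω i)

end Separable

lemma norm_sum_mul_inner_mul_inner_sq_le {𝕜 E F ι : Type*} [RCLike 𝕜]
    [NormedAddCommGroup E] [InnerProductSpace 𝕜 E] [NormedAddCommGroup F] [InnerProductSpace 𝕜 F]
    {a : ι → E} {b : ι → F} (ha : Orthonormal 𝕜 a) (hb : Orthonormal 𝕜 b)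
    {s : Finset ι} {c : ι → 𝕜} {C : ℝ} (hc : ∀ i ∈ s, ‖c i‖ ≤ C) (x : E) (y : F) :
    ‖∑ i ∈ s, c i * (inner 𝕜 (a i) x * inner 𝕜 (b i) y)‖ ^ 2 ≤ C ^ 2 * (‖x‖ ^ 2 * ‖y‖ ^ 2) := by
  have triangle : ‖∑ i ∈ s, c i * (inner 𝕜 (a i) x * inner 𝕜 (b i) y)‖
      ≤ C * ∑ i ∈ s, ‖inner 𝕜 (a i) x‖ * ‖inner 𝕜 (b i) y‖ := by
    rw [Finset.mul_sum]
    refine norm_sum_le_of_le s fun i hi => ?_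
    rw [norm_mul, norm_mul]
    gcongr
    exact hc i hi
  calc
    _ ≤ (C * ∑ i ∈ s, ‖inner 𝕜 (a i) x‖ * ‖inner 𝕜 (b i) y‖) ^ 2 := by gcongr
    _ = C ^ 2 * (∑ i ∈ s, ‖inner 𝕜 (a i) x‖ * ‖inner 𝕜 (b i) y‖) ^ 2 := mul_pow _ _ _
    _ ≤ C ^ 2 * ((∑ i ∈ s, ‖inner 𝕜 (a i) x‖ ^ 2) * ∑ i ∈ s, ‖inner 𝕜 (b i) y‖ ^ 2) := by
      gcongr
      exact Finset.sum_mul_sq_le_sq_mul_sq _ _ _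
    _ ≤ C ^ 2 * (‖x‖ ^ 2 * ‖y‖ ^ 2) := by
      gcongr
      · exact ha.sum_inner_products_le x
      · exact hb.sum_inner_products_le y

section Schmidt

variable {A B ι : Type*} [Fintype A] [Fintype B] [Fintype ι]
  {v : A × B → ℂ} {c : ι → ℂ} {a : ι → EuclideanSpace ℂ A} {b : ι → EuclideanSpace ℂ B}

lemma star_dotProduct_productVector (hv : ∀ p, v p = ∑ i, c i * a i p.1 * b i p.2)
    (x : A → ℂ) (y : B → ℂ) :
    star v ⬝ᵥ productVector x y
      = ∑ i, star (c i) * (inner ℂ (a i) (WithLp.toLp 2 x) * inner ℂ (b i) (WithLp.toLp 2 y)) := by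
  have hv' : v = ∑ i, c i • productVector (a i) (b i) := by
    ext p
    simp only [hv, Finset.sum_apply, Pi.smul_apply, smul_eq_mul, productVector, mul_assoc]
  simp only [hv', star_sum, star_smul, sum_dotProduct, smul_dotProduct, star_productVector,
    productVector_dotProduct_productVector, smul_eq_mul, EuclideanSpace.inner_eq_star_dotProduct,
    dotProduct_comm x, dotProduct_comm y]

lemma star_dotProduct_productVector_self (ha : Orthonormal ℂ a) (hb : Orthonormal ℂ b)
    (hv : ∀ p, v p = ∑ i, c i * a i p.1 * b i p.2) (k : ι) :
    star v ⬝ᵥ productVector (a k) (b k) = star (c k) := by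
  classical
  simp only [star_dotProduct_productVector hv, WithLp.toLp_ofLp, orthonormal_iff_ite.mp ha,
    orthonormal_iff_ite.mp hb, mul_ite, mul_one, mul_zero, Finset.sum_ite_eq', Finset.mem_univ,
    if_true]

lemma isBlockPositive_smul_one_sub_pureState [DecidableEq A] [DecidableEq B]
    (ha : Orthonormal ℂ a) (hb : Orthonormal ℂ b)
    (hv : ∀ p, v p = ∑ i, c i * a i p.1 * b i p.2) {C : ℝ} (hc : ∀ i, ‖c i‖ ≤ C) :
    IsBlockPositive (((C ^ 2 : ℝ) : ℂ) • 1 - pureState v) := by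
  intro x y
  have hnorm : star (productVector x y) ⬝ᵥ productVector x y
      = (‖WithLp.toLp 2 x‖ ^ 2 * ‖WithLp.toLp 2 y‖ ^ 2 : ℝ) := by
    rw [star_productVector, productVector_dotProduct_productVector, dotProduct_comm _ x,
      dotProduct_comm _ y, dotProduct_star_self_eq_norm_sq, dotProduct_star_self_eq_norm_sq,
      Complex.ofReal_mul]
  have hoverlap : ‖star v ⬝ᵥ productVector x y‖ ^ 2
      ≤ C ^ 2 * (‖WithLp.toLp 2 x‖ ^ 2 * ‖WithLp.toLp 2 y‖ ^ 2) := by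
    rw [star_dotProduct_productVector hv]
    exact norm_sum_mul_inner_mul_inner_sq_le ha hb
      (fun i _ => (norm_star (c i)).trans_le (hc i)) _ _
  rw [sub_mulVec, smul_mulVec, one_mulVec, dotProduct_sub, dotProduct_smul, hnorm, smul_eq_mul,
    star_dotProduct_pureState_mulVec, sub_nonneg]
  exact_mod_cast hoverlap

lemma trace_pureState_mul_le [DecidableEq A] [DecidableEq B]
    (ha : Orthonormal ℂ a) (hb : Orthonormal ℂ b)
    (hv : ∀ p, v p = ∑ i, c i * a i p.1 * b i p.2) {C : ℝ} (hc : ∀ i, ‖c i‖ ≤ C)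
    {σ : Matrix (A × B) (A × B) ℂ} (hσ : SepOp σ) :
    (pureState v * σ).trace ≤ ((C ^ 2 : ℝ) : ℂ) * σ.trace := by
  have hwitness := (isBlockPositive_smul_one_sub_pureState ha hb hv hc).trace_mul_nonneg hσ
  rwa [sub_mul, smul_mul, one_mul, trace_sub, trace_smul, smul_eq_mul, sub_nonneg] at hwitness

theorem stmt0_general [DecidableEq A] [DecidableEq B]
    (ha : Orthonormal ℂ a) (hb : Orthonormal ℂ b)
    (hv : ∀ p, v p = ∑ i, c i * a i p.1 * b i p.2) {k : ι} (hk : ∀ i, ‖c i‖ ≤ ‖c k‖) :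
    IsGreatest {x : ℝ | ∃ σ : Matrix (A × B) (A × B) ℂ,
      SepOp σ ∧ σ.trace = 1 ∧ (pureState v * σ).trace = (x : ℂ)} (‖c k‖ ^ 2) := by
  constructor
  · refine ⟨pureState (a k) ⊗ₖ pureState (b k),
      sepOp_kronecker (posSemidef_pureState _) (posSemidef_pureState _), ?_, ?_⟩
    · simp only [trace_kronecker, trace_pureState, WithLp.toLp_ofLp, ha.1, hb.1, one_pow,
        Complex.ofReal_one, mul_one]
    · rw [pureState_kronecker_pureState, trace_mul_pureState, star_dotProduct_pureState_mulVec,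
        star_dotProduct_productVector_self ha hb hv, norm_star]
  · rintro x ⟨σ, hσ, htrace, hx⟩
    have hle := trace_pureState_mul_le ha hb hv hk hσ
    rw [hx, htrace, mul_one] at hle
    exact_mod_cast hle

end Schmidt

/-- The maximum of `Tr(ψσ)` over separable states `σ` equals the largest Schmidt
coefficient `λ₁` of the pure state `ψ`, and the maximum is attained. -/
theorem stmt0 {dA dB d : ℕ} (hd : 0 < d) (v : Fin dA × Fin dB → ℂ) (lam : Fin d → ℝ)
    (hmono : Antitone lam) (hsum : ∑ i, lam i = 1)
    (hS : HasSchmidtCoeffs v lam) :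
    IsGreatest {x : ℝ | ∃ σ : Matrix (Fin dA × Fin dB) (Fin dA × Fin dB) ℂ,
      SepOp σ ∧ σ.trace = 1 ∧ (pureState v * σ).trace = (x : ℂ)} (lam ⟨0, hd⟩) := by
  obtain ⟨a, b, ha, hb, hnonneg, hv⟩ := hS
  have hnorm (i : Fin d) : ‖(√(lam i) : ℂ)‖ = √(lam i) :=
    Complex.norm_of_nonneg (Real.sqrt_nonneg _)
  have hmax (i : Fin d) : ‖(√(lam i) : ℂ)‖ ≤ ‖(√(lam ⟨0, hd⟩) : ℂ)‖ := by
    simpa only [hnorm] using Real.sqrt_le_sqrt (hmono (Fin.mk_le_of_le_val (Nat.zero_le _)))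
  simpa only [hnorm, Real.sq_sqrt (hnonneg _)] using stmt0_general ha hb hv hmax
end
end

section
/- Let k and d be integers with 2 ≤ k < d and let −(d+1) ≤ β ≤ d−1. For the Werner state ρ_d(β) = (1/(d² − (β+1)))(𝟙_{d²} − ((β+1)/d) F_d) on ℂ^d ⊗ ℂ^d, the operator (P ⊗ Q) ρ_d(β) (P ⊗ Q)† is separable on ℂ^k ⊗ ℂ^k for ALL k-dimensional projections P, Q : ℂ^d → ℂ^k (linear maps with P P† = 𝟙_k, Q Q† = 𝟙_k) if and only if β ≤ (d−k)/k. -/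
/-!
Put `c = (β + 1) / d`. Up to a positive factor the compressed state is
`1 - c (P ⊗ Q) F_d (P ⊗ Q)†`, and the claim is that, for `-1 ≤ c`, it is separable for all `P`, `Q`
exactly when `c k ≤ 1`.

*Necessity.* The flip has nonnegative trace against every separable operator, as
`tr ((τ ⊗ ω) F) = tr (τ ω)`. If `P = Q`, the compression of `F_d` is `F_k`, and
`tr ((1 - c F_k) F_k) = k (1 - c k)`.

*Sufficiency.* With the contraction `M = P Q†`, the compression of `F_d` is
`X = (M ⊗ 1) F_k (M ⊗ 1)†`. Since `1 - c X` is affine in `c`, only the endpoints `1 + X` and `k - X`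
matter. There `r ± X = r (1 - M M†) ⊗ 1 + (M ⊗ 1) (r ± F_k) (M ⊗ 1)†` reduces everything to
`1 + F_k` and `k - F_k`. If `φ` runs over the vectors whose entries are cube roots of unity,
then the average of `φφ†` is `1` and that of `φφ† ⊗ φφ†` is `1 + F_k - D`, where `D` projects onto
the span of the `e_i ⊗ e_i`. Therefore `1 + F_k = 𝔼 (φφ† ⊗ φφ†) + D` and
`k - F_k = 𝔼 (φφ† ⊗ (k - φφ†)) + (1 - D)`.
-/

open Matrix BigOperators
open scoped Kronecker ComplexOrder

noncomputable section

/-- The flip (swap) operator `F_d = Σ_{i,j} |ij⟩⟨ji|` on `ℂ^d ⊗ ℂ^d`. -/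
def flipOp (d : ℕ) : Matrix (Fin d × Fin d) (Fin d × Fin d) ℂ :=
  Matrix.of fun p q => if p.1 = q.2 ∧ p.2 = q.1 then 1 else 0

/-- The Werner state `ρ_d(β) = (𝟙 − ((β+1)/d)F_d)/(d² − (β+1))`. -/
def wernerState (d : ℕ) (β : ℝ) : Matrix (Fin d × Fin d) (Fin d × Fin d) ℂ :=
  ((((d : ℝ) ^ 2 - (β + 1))⁻¹ : ℝ) : ℂ) •
    ((1 : Matrix (Fin d × Fin d) (Fin d × Fin d) ℂ) -
      ((((β + 1) / d : ℝ) : ℂ) • flipOp d))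

section PosSemidef

variable {l m n : Type*} [Fintype n]

lemma posSemidef_smul_one_sub_conjTranspose_mul_self [Fintype m] [DecidableEq m] [DecidableEq n]
    {r : ℝ} (hr : 0 < r) {V : Matrix m n ℂ} (hV : V * Vᴴ = (r : ℂ) • 1) :
    ((r : ℂ) • 1 - Vᴴ * V).PosSemidef := by
  set A := (r : ℂ) • (1 : Matrix n n ℂ) - Vᴴ * V with hA
  have hA_star : Aᴴ = A := by simp [hA]
  have hVV : Vᴴ * V * (Vᴴ * V) = (r : ℂ) • (Vᴴ * V) := by
    rw [Matrix.mul_assoc, ← Matrix.mul_assoc V, hV]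
    simp
  have hAA : A * Aᴴ = (r : ℂ) • A := by
    rw [hA_star, hA]
    simp only [Matrix.mul_sub, Matrix.sub_mul, hVV, Matrix.smul_mul, Matrix.mul_smul,
      Matrix.one_mul, Matrix.mul_one]
    module
  have hA_eq : A = ((r⁻¹ : ℝ) : ℂ) • (A * Aᴴ) := by
    rw [hAA, smul_smul, ← Complex.ofReal_mul, inv_mul_cancel₀ hr.ne', Complex.ofReal_one, one_smul]
  rw [hA_eq]
  exact (posSemidef_self_mul_conjTranspose A).smul (by exact_mod_cast (inv_pos.2 hr).le)

lemma posSemidef_smul_one_sub_vecMulVec_self_star [DecidableEq n] {v : n → ℂ} {r : ℝ}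
    (hr : 0 < r) (hv : star v ⬝ᵥ v = r) :
    ((r : ℂ) • 1 - vecMulVec v (star v)).PosSemidef := by
  have h := posSemidef_smul_one_sub_conjTranspose_mul_self (V := replicateRow Unit (star v)) hr
    (by ext; simp [Matrix.mul_apply, ← hv, dotProduct])
  rwa [conjTranspose_replicateRow, star_star, ← vecMulVec_eq] at h

lemma posSemidef_one_sub_mul_conjTranspose [Finite l] [Fintype m] [DecidableEq l] [DecidableEq m]
    {P : Matrix l n ℂ} {Q : Matrix m n ℂ} (hP : P * Pᴴ = 1) (hQ : Q * Qᴴ = 1) :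
    (1 - P * Qᴴ * (P * Qᴴ)ᴴ).PosSemidef := by
  classical
  have hproj : (1 - Qᴴ * Q).PosSemidef := by
    simpa using posSemidef_smul_one_sub_conjTranspose_mul_self one_pos (by simpa using hQ)
  have h : P * (1 - Qᴴ * Q) * Pᴴ = 1 - P * Qᴴ * (P * Qᴴ)ᴴ := by
    simp [Matrix.mul_sub, Matrix.sub_mul, hP, Matrix.mul_assoc]
  exact h ▸ hproj.mul_mul_conjTranspose_same P

open scoped MatrixOrder in
lemma trace_mul_nonneg_of_posSemidef {S T : Matrix n n ℂ} (hS : S.PosSemidef)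
    (hT : T.PosSemidef) : 0 ≤ (S * T).trace := by
  classical
  obtain ⟨R, rfl⟩ := CStarAlgebra.nonneg_iff_eq_star_mul_self.1 hS.nonneg
  rw [star_eq_conjTranspose, Matrix.mul_assoc, Matrix.trace_mul_comm]
  exact (hT.mul_mul_conjTranspose_same R).trace_nonneg

lemma submatrix_one_mul_conjTranspose [DecidableEq m] [DecidableEq n] (e : m ↪ n) :
    (1 : Matrix n n ℂ).submatrix e id * ((1 : Matrix n n ℂ).submatrix e id)ᴴ = 1 := by
  rw [conjTranspose_submatrix, conjTranspose_one, ← submatrix_mul _ _ _ _ _ Function.bijective_id,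
    Matrix.one_mul, submatrix_one_embedding]

end PosSemidef

namespace SepOp

variable {A B : Type*} [Fintype A] [Fintype B] [DecidableEq A] [DecidableEq B]
  {X Y : Matrix (A × B) (A × B) ℂ}

lemma sum_kronecker {ι : Type*} [Fintype ι] {τ : ι → Matrix A A ℂ} {ω : ι → Matrix B B ℂ}
    (hτ : ∀ i, (τ i).PosSemidef) (hω : ∀ i, (ω i).PosSemidef) : SepOp (∑ i, τ i ⊗ₖ ω i) :=
  let e := (Fintype.equivFin ι).symm
  ⟨Fintype.card ι, τ ∘ e, ω ∘ e, fun _ => hτ _, fun _ => hω _,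
    (e.sum_comp fun i => τ i ⊗ₖ ω i).symm⟩

lemma kronecker {τ : Matrix A A ℂ} {ω : Matrix B B ℂ} (hτ : τ.PosSemidef) (hω : ω.PosSemidef) :
    SepOp (τ ⊗ₖ ω) := by
  simpa using sum_kronecker (ι := Unit) (fun _ => hτ) (fun _ => hω)

lemma add (hX : SepOp X) (hY : SepOp Y) : SepOp (X + Y) := by
  obtain ⟨N, τ, ω, hτ, hω, rfl⟩ := hX
  obtain ⟨N', τ', ω', hτ', hω', rfl⟩ := hY
  simpa using sum_kronecker (τ := Sum.elim τ τ') (ω := Sum.elim ω ω')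
    (Sum.rec hτ hτ') (Sum.rec hω hω')

lemma smul (hX : SepOp X) {r : ℝ} (hr : 0 ≤ r) : SepOp ((r : ℂ) • X) := by
  obtain ⟨N, τ, ω, hτ, hω, rfl⟩ := hX
  refine ⟨N, fun i => (r : ℂ) • τ i, ω, fun i => (hτ i).smul (by exact_mod_cast hr), hω, ?_⟩
  simp only [Finset.smul_sum, smul_kronecker]

lemma smul_iff {r : ℝ} (hr : 0 < r) : SepOp ((r : ℂ) • X) ↔ SepOp X := by
  refine ⟨fun h => ?_, fun h => h.smul hr.le⟩
  have hcancel : ((r⁻¹ : ℝ) : ℂ) • (r : ℂ) • X = X := by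
    rw [smul_smul, ← Complex.ofReal_mul, inv_mul_cancel₀ hr.ne', Complex.ofReal_one, one_smul]
  exact hcancel ▸ h.smul (inv_pos.2 hr).le

lemma expect_kronecker {ι : Type*} [Fintype ι] {τ : ι → Matrix A A ℂ} {ω : ι → Matrix B B ℂ}
    (hτ : ∀ i, (τ i).PosSemidef) (hω : ∀ i, (ω i).PosSemidef) : SepOp (𝔼 i, τ i ⊗ₖ ω i) := by
  rw [Finset.expect, ← NNRat.cast_smul_eq_nnqsmul ℂ]
  exact_mod_cast (sum_kronecker hτ hω).smul (r := ((Fintype.card ι : ℚ≥0)⁻¹ : ℚ≥0))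
    (by positivity)

lemma kronecker_mul_mul_conjTranspose {A' B' : Type*} [Fintype A'] [Fintype B']
    [DecidableEq A'] [DecidableEq B'] (hX : SepOp X) (S : Matrix A' A ℂ) (T : Matrix B' B ℂ) :
    SepOp ((S ⊗ₖ T) * X * (S ⊗ₖ T)ᴴ) := by
  obtain ⟨N, τ, ω, hτ, hω, rfl⟩ := hX
  refine ⟨N, fun i => S * τ i * Sᴴ, fun i => T * ω i * Tᴴ,
    fun i => (hτ i).mul_mul_conjTranspose_same S, fun i => (hω i).mul_mul_conjTranspose_same T, ?_⟩
  simp only [Matrix.mul_sum, Matrix.sum_mul, conjTranspose_kronecker, mul_kronecker_mul]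

lemma diagonal {w : A × B → ℂ} (hw : 0 ≤ w) : SepOp (diagonal w) := by
  have hsum : Matrix.diagonal w =
      ∑ a, Matrix.diagonal (Pi.single a 1) ⊗ₖ Matrix.diagonal fun b => w (a, b) := by
    ext p q
    simp [diagonal_kronecker_diagonal, Matrix.sum_apply, Matrix.diagonal_apply, Pi.single_apply]
  rw [hsum]
  exact sum_kronecker (fun a => .diagonal (Pi.single_nonneg.2 zero_le_one))
    (fun a => .diagonal fun b => hw (a, b))

lemma smul_one_add_kronecker_one_conj {A' : Type*} [Fintype A'] [DecidableEq A']
    {r : ℝ} (hr : 0 ≤ r) (hX : SepOp ((r : ℂ) • 1 + X))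
    {M : Matrix A' A ℂ} (hM : (1 - M * Mᴴ).PosSemidef) :
    SepOp ((r : ℂ) • 1 + (M ⊗ₖ (1 : Matrix B B ℂ)) * X * (M ⊗ₖ (1 : Matrix B B ℂ))ᴴ) := by
  have hMM : (M ⊗ₖ (1 : Matrix B B ℂ)) * (M ⊗ₖ (1 : Matrix B B ℂ))ᴴ = (M * Mᴴ) ⊗ₖ 1 := by
    rw [conjTranspose_kronecker, ← mul_kronecker_mul, conjTranspose_one, Matrix.mul_one]
  have hone : (1 - M * Mᴴ) ⊗ₖ (1 : Matrix B B ℂ) + (M * Mᴴ) ⊗ₖ 1 = 1 := by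
    rw [← add_kronecker, sub_add_cancel, one_kronecker_one]
  convert ((kronecker hM (Matrix.PosSemidef.one (n := B))).smul hr).add
    (hX.kronecker_mul_mul_conjTranspose M 1) using 1
  rw [Matrix.mul_add, Matrix.add_mul, Matrix.mul_smul, Matrix.smul_mul, Matrix.mul_one, hMM,
    ← add_assoc, ← smul_add, hone]

lemma one_sub_smul_of_one_add_of_smul_one_sub {s : ℝ} (hs : 0 ≤ s)
    (hadd : SepOp (1 + X)) (hsub : SepOp ((s : ℂ) • 1 - X))
    {c : ℝ} (hc : -1 ≤ c) (hcs : c * s ≤ 1) : SepOp (1 - (c : ℂ) • X) := by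
  rw [← smul_iff (by linarith : 0 < 1 + s)]
  convert (hadd.smul (sub_nonneg.2 hcs)).add (hsub.smul (neg_le_iff_add_nonneg'.1 hc)) using 1
  push_cast
  module

end SepOp

section Flip

lemma flipOp_mul_kronecker {d k : ℕ} (S T : Matrix (Fin d) (Fin k) ℂ) :
    flipOp d * (S ⊗ₖ T) = (T ⊗ₖ S) * flipOp k := by
  ext ⟨i, j⟩ ⟨a, b⟩
  simp [flipOp, Matrix.mul_apply, Fintype.sum_prod_type, ite_and, mul_comm]

lemma kronecker_mul_flipOp_mul {d k : ℕ} (P Q : Matrix (Fin k) (Fin d) ℂ) :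
    (P ⊗ₖ Q) * flipOp d * (P ⊗ₖ Q)ᴴ =
      ((P * Qᴴ) ⊗ₖ (1 : Matrix (Fin k) (Fin k) ℂ)) * flipOp k * ((P * Qᴴ) ⊗ₖ 1)ᴴ := by
  simp only [conjTranspose_kronecker, Matrix.mul_assoc, flipOp_mul_kronecker]
  simp only [← Matrix.mul_assoc, ← mul_kronecker_mul]
  simp

lemma flipOp_mul_self (d : ℕ) : flipOp d * flipOp d = 1 := by
  ext ⟨i, j⟩ ⟨a, b⟩
  simp [flipOp, Matrix.mul_apply, Fintype.sum_prod_type, ite_and, Matrix.one_apply]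

lemma trace_kronecker_mul_flipOp {d : ℕ} (S T : Matrix (Fin d) (Fin d) ℂ) :
    ((S ⊗ₖ T) * flipOp d).trace = (S * T).trace := by
  simp [flipOp, Matrix.trace, Matrix.mul_apply, Fintype.sum_prod_type, ite_and]

lemma trace_flipOp (d : ℕ) : (flipOp d).trace = d := by
  simpa using trace_kronecker_mul_flipOp (1 : Matrix (Fin d) (Fin d) ℂ) 1

lemma SepOp.trace_mul_flipOp_nonneg {d : ℕ} {X : Matrix (Fin d × Fin d) (Fin d × Fin d) ℂ}
    (hX : SepOp X) : 0 ≤ (X * flipOp d).trace := by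
  obtain ⟨N, τ, ω, hτ, hω, rfl⟩ := hX
  simp only [Matrix.sum_mul, Matrix.trace_sum, trace_kronecker_mul_flipOp]
  exact Finset.sum_nonneg fun i _ => trace_mul_nonneg_of_posSemidef (hτ i) (hω i)

lemma mul_natCast_le_one_of_sepOp_one_sub_smul_flipOp {k : ℕ} (hk : 0 < k) {c : ℝ}
    (h : SepOp (1 - (c : ℂ) • flipOp k)) : c * k ≤ 1 := by
  have htrace : ((1 - (c : ℂ) • flipOp k) * flipOp k).trace = (k * (1 - c * k) : ℝ) := by
    rw [Matrix.sub_mul, Matrix.one_mul, Matrix.smul_mul, flipOp_mul_self, Matrix.trace_sub,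
      Matrix.trace_smul, Matrix.trace_one, trace_flipOp]
    push_cast [Fintype.card_prod, Fintype.card_fin, smul_eq_mul]
    ring
  have hnonneg : 0 ≤ k * (1 - c * k) := by
    exact_mod_cast htrace ▸ h.trace_mul_flipOp_nonneg
  exact sub_nonneg.1 (nonneg_of_mul_nonneg_right hnonneg (Nat.cast_pos.2 hk))

end Flip

section Phase

lemma matrix_expect_apply {κ m n α : Type*} [Fintype κ] [AddCommMonoid α] [Module ℚ≥0 α]
    (M : κ → Matrix m n α) (i : m) (j : n) : (𝔼 x, M x) i j = 𝔼 x, M x i j :=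
  map_expect (Matrix.entryLinearMap ℚ≥0 α i j) M Finset.univ

variable {ι : Type*}

/-- The vector with entries `exp (2πi gᵢ / 3)`; averaging over all `g` replaces integration over
the torus of diagonal unitaries. Signs would not do: they make `𝔼 φᵢ² (φₐ*)²` nonzero for
`i ≠ a`. -/
def phaseVec (g : ι → ZMod 3) : ι → ℂ := fun i => ZMod.stdAddChar (g i)

/-- The unnormalised pure state `φφ†` of the phase vector `φ = phaseVec g`. -/
def phaseProj (g : ι → ZMod 3) : Matrix ι ι ℂ := vecMulVec (phaseVec g) (star (phaseVec g))

lemma phaseProj_apply (g : ι → ZMod 3) (i a : ι) :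
    phaseProj g i a = ZMod.stdAddChar (g i - g a) := by
  rw [phaseProj, vecMulVec_apply, Pi.star_apply, phaseVec, phaseVec, RCLike.star_def,
    ← AddChar.map_neg_eq_conj, ← AddChar.map_add_eq_mul, sub_eq_add_neg]

lemma expect_stdAddChar_comp {G : Type*} [AddCommGroup G] [Fintype G] {N : ℕ} [NeZero N]
    (f : G →+ ZMod N) [Decidable (f = 0)] :
    𝔼 x, (ZMod.stdAddChar (f x) : ℂ) = if f = 0 then 1 else 0 := by
  classical
  have hzero : ZMod.stdAddChar.compAddMonoidHom f = (0 : AddChar G ℂ) ↔ f = 0 := by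
    rw [← (AddChar.compAddMonoidHom_injective_right _ ZMod.injective_stdAddChar).eq_iff]
    simp [AddChar.ext_iff]
  simpa [hzero] using AddChar.expect_eq_ite (ZMod.stdAddChar.compAddMonoidHom f : AddChar G ℂ)

/-- The functional `g ↦ gᵢ - gₐ`, which gives the phase of the `(i, a)` entry of `phaseProj g`. -/
def phaseDiff (i a : ι) : (ι → ZMod 3) →+ ZMod 3 :=
  Pi.evalAddMonoidHom (fun _ => ZMod 3) i - Pi.evalAddMonoidHom (fun _ => ZMod 3) a

lemma phaseDiff_apply (i a : ι) (g : ι → ZMod 3) : phaseDiff i a g = g i - g a := rfl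

lemma phaseDiff_eq_zero_iff {i a : ι} : phaseDiff i a = 0 ↔ i = a := by
  classical
  refine ⟨fun h => ?_, fun h => by simp [h, phaseDiff]⟩
  by_contra hia
  simpa [phaseDiff_apply, Ne.symm hia] using DFunLike.congr_fun h (Pi.single i 1)

lemma phaseDiff_add_eq_zero_iff {i j a b : ι} :
    phaseDiff i a + phaseDiff j b = 0 ↔ i = a ∧ j = b ∨ i = b ∧ j = a := by
  classical
  constructor
  · intro h
    have hi := DFunLike.congr_fun h (Pi.single i 1)
    have hj := DFunLike.congr_fun h (Pi.single j 1)
    simp only [AddMonoidHom.add_apply, phaseDiff_apply, Pi.single_apply, AddMonoidHom.zero_apply]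
      at hi hj
    have : (1 : ZMod 3) + 1 ≠ 0 := by decide
    grind
  · rintro (⟨rfl, rfl⟩ | ⟨rfl, rfl⟩) <;> ext <;> simp [phaseDiff_apply]

lemma expect_phaseProj [Fintype ι] [DecidableEq ι] : 𝔼 g, phaseProj g = (1 : Matrix ι ι ℂ) := by
  ext i a
  rw [matrix_expect_apply]
  simp only [phaseProj_apply, ← phaseDiff_apply]
  classical
  rw [expect_stdAddChar_comp]
  simp only [phaseDiff_eq_zero_iff, Matrix.one_apply]

/-- The orthogonal projection onto the span of the vectors `e_i ⊗ e_i`. -/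
def diagProj (ι : Type*) [DecidableEq ι] : Matrix (ι × ι) (ι × ι) ℂ :=
  diagonal fun p => if p.1 = p.2 then 1 else 0

lemma expect_phaseProj_kronecker_self (k : ℕ) :
    𝔼 g : Fin k → ZMod 3, phaseProj g ⊗ₖ phaseProj g = 1 + flipOp k - diagProj (Fin k) := by
  classical
  ext ⟨i, j⟩ ⟨a, b⟩
  rw [matrix_expect_apply]
  simp only [kroneckerMap_apply, phaseProj_apply, ← AddChar.map_add_eq_mul, ← phaseDiff_apply,
    ← AddMonoidHom.add_apply, expect_stdAddChar_comp, phaseDiff_add_eq_zero_iff]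
  simp only [flipOp, diagProj, Matrix.sub_apply, Matrix.add_apply, Matrix.one_apply,
    Matrix.of_apply, Matrix.diagonal_apply, Prod.mk.injEq]
  grind

lemma expect_phaseProj_kronecker_smul_one_sub (k : ℕ) :
    𝔼 g : Fin k → ZMod 3, phaseProj g ⊗ₖ ((k : ℂ) • 1 - phaseProj g) =
      (k : ℂ) • 1 - (1 + flipOp k - diagProj (Fin k)) := by
  have hleft : 𝔼 g : Fin k → ZMod 3, phaseProj g ⊗ₖ (1 : Matrix (Fin k) (Fin k) ℂ) = 1 := by
    rw [← one_kronecker_one]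
    ext p q
    simp only [matrix_expect_apply, kroneckerMap_apply, ← expect_phaseProj, Finset.expect_mul]
  have hsub (g : Fin k → ZMod 3) : phaseProj g ⊗ₖ ((k : ℂ) • 1 - phaseProj g) =
      (k : ℂ) • phaseProj g ⊗ₖ 1 - phaseProj g ⊗ₖ phaseProj g := by
    rw [← kronecker_smul]
    exact map_sub (kroneckerBilinear (R := ℂ) (phaseProj g)) _ _
  rw [Finset.expect_congr rfl fun g _ => hsub g, Finset.expect_sub_distrib,
    ← Finset.smul_expect, hleft, expect_phaseProj_kronecker_self]

lemma posSemidef_phaseProj [Finite ι] (g : ι → ZMod 3) : (phaseProj g).PosSemidef :=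
  posSemidef_vecMulVec_self_star _

lemma posSemidef_smul_one_sub_phaseProj {k : ℕ} (hk : 0 < k) (g : Fin k → ZMod 3) :
    ((k : ℂ) • 1 - phaseProj g).PosSemidef := by
  have hnorm : star (phaseVec g) ⬝ᵥ phaseVec g = (k : ℝ) := by
    rw [dotProduct_comm, ← trace_vecMulVec, ← phaseProj]
    simp [Matrix.trace, phaseProj_apply]
  exact_mod_cast posSemidef_smul_one_sub_vecMulVec_self_star (Nat.cast_pos.2 hk) hnorm

lemma sepOp_diagProj (ι : Type*) [Fintype ι] [DecidableEq ι] : SepOp (diagProj ι) :=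
  .diagonal fun p => by dsimp only; split_ifs <;> simp

lemma sepOp_one_sub_diagProj (ι : Type*) [Fintype ι] [DecidableEq ι] :
    SepOp (1 - diagProj ι) := by
  rw [diagProj, ← diagonal_one, diagonal_sub]
  exact .diagonal fun p => by dsimp only; split_ifs <;> simp

theorem sepOp_one_add_flipOp (k : ℕ) : SepOp (1 + flipOp k) := by
  have h := (SepOp.expect_kronecker (posSemidef_phaseProj (ι := Fin k)) posSemidef_phaseProj).add
    (sepOp_diagProj (Fin k))
  rwa [expect_phaseProj_kronecker_self, sub_add_cancel] at h

theorem sepOp_smul_one_sub_flipOp {k : ℕ} (hk : 0 < k) : SepOp ((k : ℂ) • 1 - flipOp k) := by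
  have h := (SepOp.expect_kronecker posSemidef_phaseProj
    (posSemidef_smul_one_sub_phaseProj hk)).add (sepOp_one_sub_diagProj (Fin k))
  rw [expect_phaseProj_kronecker_smul_one_sub] at h
  convert h using 1
  abel

end Phase

section Compression

variable {k d : ℕ} {P Q : Matrix (Fin k) (Fin d) ℂ}

theorem sepOp_one_sub_smul_flipOp_compression (hk : 0 < k) (hP : P * Pᴴ = 1) (hQ : Q * Qᴴ = 1)
    {c : ℝ} (hc : -1 ≤ c) (hck : c * k ≤ 1) :
    SepOp (1 - (c : ℂ) • ((P ⊗ₖ Q) * flipOp d * (P ⊗ₖ Q)ᴴ)) := by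
  have hM := posSemidef_one_sub_mul_conjTranspose hP hQ
  rw [kronecker_mul_flipOp_mul]
  refine SepOp.one_sub_smul_of_one_add_of_smul_one_sub k.cast_nonneg ?_ ?_ hc hck
  · simpa using SepOp.smul_one_add_kronecker_one_conj zero_le_one
      (by simpa using sepOp_one_add_flipOp k) hM
  · simpa [sub_eq_add_neg] using
      SepOp.smul_one_add_kronecker_one_conj k.cast_nonneg (X := -flipOp k)
        (by simpa [sub_eq_add_neg] using sepOp_smul_one_sub_flipOp hk) hM

lemma sepOp_wernerState_compression_iff (hP : P * Pᴴ = 1) (hQ : Q * Qᴴ = 1) {β : ℝ}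
    (hβ : β < (d : ℝ) ^ 2 - 1) :
    SepOp ((P ⊗ₖ Q) * wernerState d β * (P ⊗ₖ Q)ᴴ) ↔
      SepOp (1 - (((β + 1) / d : ℝ) : ℂ) • ((P ⊗ₖ Q) * flipOp d * (P ⊗ₖ Q)ᴴ)) := by
  have hPQ : (P ⊗ₖ Q) * (P ⊗ₖ Q)ᴴ = 1 := by
    rw [conjTranspose_kronecker, ← mul_kronecker_mul, hP, hQ, one_kronecker_one]
  rw [wernerState, Matrix.mul_smul, Matrix.smul_mul, SepOp.smul_iff (inv_pos.2 (by linarith)),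
    Matrix.mul_sub, Matrix.sub_mul, Matrix.mul_one, hPQ, Matrix.mul_smul, Matrix.smul_mul]

end Compression

theorem stmt16_general (k d : ℕ) (hk : 0 < k) (hkd : k ≤ d) (β : ℝ)
    (hβ₁ : -((d : ℝ) + 1) ≤ β) (hβ₂ : β < (d : ℝ) ^ 2 - 1) :
    (∀ P Q : Matrix (Fin k) (Fin d) ℂ,
      P * Pᴴ = 1 → Q * Qᴴ = 1 →
      SepOp ((P ⊗ₖ Q) * wernerState d β * (P ⊗ₖ Q)ᴴ))
    ↔ β ≤ ((d : ℝ) - k) / k := by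
  have hk' : (0 : ℝ) < k := Nat.cast_pos.2 hk
  have hd : (0 : ℝ) < d := Nat.cast_pos.2 (hk.trans_le hkd)
  have hthreshold : β ≤ ((d : ℝ) - k) / k ↔ (β + 1) / d * k ≤ 1 := by
    rw [le_div_iff₀ hk', div_mul_eq_mul_div, div_le_one hd, le_sub_iff_add_le, add_one_mul]
  rw [hthreshold]
  constructor
  · intro h
    have hP := submatrix_one_mul_conjTranspose (Fin.castLEEmb hkd)
    have hsep := (sepOp_wernerState_compression_iff hP hP hβ₂).1 (h _ _ hP hP)
    rw [kronecker_mul_flipOp_mul, hP] at hsep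
    exact mul_natCast_le_one_of_sepOp_one_sub_smul_flipOp hk (by simpa using hsep)
  · intro hc P Q hP hQ
    have hc' : -1 ≤ (β + 1) / d := by rw [le_div_iff₀ hd]; linarith
    exact (sepOp_wernerState_compression_iff hP hQ hβ₂).2
      (sepOp_one_sub_smul_flipOp_compression hk hP hQ hc' hc)

/-- For `2 ≤ k < d` and `−(d+1) ≤ β ≤ d−1`: the compression
`(P ⊗ Q) ρ_d(β) (P ⊗ Q)†` is separable for all `k`-dimensional projections `P, Q`
iff `β ≤ (d−k)/k`. -/
theorem stmt16 (k d : ℕ) (hk : 2 ≤ k) (hkd : k < d) (β : ℝ)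
    (hβ₁ : -((d : ℝ) + 1) ≤ β) (hβ₂ : β ≤ (d : ℝ) - 1) :
    (∀ P Q : Matrix (Fin k) (Fin d) ℂ,
      P * Pᴴ = 1 → Q * Qᴴ = 1 →
      SepOp ((P ⊗ₖ Q) * wernerState d β * (P ⊗ₖ Q)ᴴ))
    ↔ β ≤ ((d : ℝ) - k) / k := by
  have hd : (2 : ℝ) < d := by exact_mod_cast hk.trans_lt hkd
  exact stmt16_general k d (by lia) hkd.le β hβ₁ (by nlinarith)
end
end

section
/- For all real numbers x, y > 0 with x ≠ y and all r ∈ (−1, 0) ∪ (0, 1), it holds that (1/r)·(x^r − y^r)/(x − y) ≤ (xy)^{(r−1)/2}. -/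
/-!
With `t = log (x / y) / 2` one has `x ^ r - y ^ r = 2 (xy) ^ (r / 2) sinh (r t)`. Dividing by the
case `r = 1` of this identity turns the claim into `sinh (r t) / (r sinh t) ≤ 1`. The quotient is
even in `r` and in `t`, and for `r ∈ [0, 1]` and `t ≥ 0` the bound is the convexity of `sinh`
on `[0, ∞)` between `0` and `t`.
-/

open Real

theorem convexOn_sinh : ConvexOn ℝ (Set.Ici 0) sinh := by
  refine MonotoneOn.convexOn_of_deriv (convex_Ici 0) continuous_sinh.continuousOn
    differentiable_sinh.differentiableOn ?_
  rw [Real.deriv_sinh]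
  exact cosh_strictMonoOn.monotoneOn.mono interior_subset

theorem sinh_mul_le_mul_sinh {s t : ℝ} (hs₀ : 0 ≤ s) (hs₁ : s ≤ 1) (ht : 0 ≤ t) :
    sinh (s * t) ≤ s * sinh t := by
  simpa using convexOn_sinh.2 (Set.mem_Ici.2 ht) Set.self_mem_Ici hs₀ (sub_nonneg.2 hs₁)
    (add_sub_cancel s 1)

theorem abs_sinh_mul_le {r : ℝ} (hr : |r| ≤ 1) (t : ℝ) : |sinh (r * t)| ≤ |r| * |sinh t| := by
  rw [abs_sinh, abs_sinh, abs_mul]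
  exact sinh_mul_le_mul_sinh (abs_nonneg r) hr (abs_nonneg t)

theorem rpow_sub_rpow_eq_mul_sinh {x y : ℝ} (hx : 0 < x) (hy : 0 < y) (r : ℝ) :
    x ^ r - y ^ r = 2 * (x * y) ^ (r / 2) * sinh (r * (log (x / y) / 2)) := by
  rw [rpow_def_of_pos hx, rpow_def_of_pos hy, rpow_def_of_pos (mul_pos hx hy),
    log_mul hx.ne' hy.ne', log_div hx.ne' hy.ne', sinh_eq, mul_right_comm,
    mul_div_cancel₀ _ two_ne_zero, sub_mul, ← exp_add, ← exp_add]
  ring_nf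

theorem abs_rpow_sub_rpow_le {x y r : ℝ} (hx : 0 < x) (hy : 0 < y) (hr : |r| ≤ 1) :
    |x ^ r - y ^ r| ≤ (x * y) ^ ((r - 1) / 2) * (|r| * |x - y|) := by
  have hxy : 0 < x * y := mul_pos hx hy
  set t := log (x / y) / 2
  have abs_rpow_sub (s : ℝ) : |x ^ s - y ^ s| = 2 * (x * y) ^ (s / 2) * |sinh (s * t)| := by
    rw [rpow_sub_rpow_eq_mul_sinh hx hy, abs_mul, abs_of_pos (by positivity)]
  have abs_sub_one : |x - y| = 2 * (x * y) ^ ((1 : ℝ) / 2) * |sinh t| := by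
    simpa only [rpow_one, one_mul] using abs_rpow_sub 1
  calc |x ^ r - y ^ r| = 2 * (x * y) ^ (r / 2) * |sinh (r * t)| := abs_rpow_sub r
    _ ≤ 2 * (x * y) ^ (r / 2) * (|r| * |sinh t|) := by
      gcongr
      exact abs_sinh_mul_le hr t
    _ = (x * y) ^ ((r - 1) / 2) * (|r| * |x - y|) := by
      rw [abs_sub_one, show r / 2 = (r - 1) / 2 + 1 / 2 by ring, rpow_add hxy]
      ring

/-- For all `x, y > 0` with `x ≠ y` and `r ∈ (−1,0) ∪ (0,1)`:
`(1/r)·(x^r − y^r)/(x − y) ≤ (xy)^{(r−1)/2}`. -/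
theorem stmt18 (x y r : ℝ) (hx : 0 < x) (hy : 0 < y) (hxy : x ≠ y)
    (hr : r ∈ Set.Ioo (-1 : ℝ) 0 ∪ Set.Ioo (0 : ℝ) 1) :
    (1 / r) * ((x ^ r - y ^ r) / (x - y)) ≤ (x * y) ^ ((r - 1) / 2) := by
  have hr₁ : |r| ≤ 1 := by
    rw [abs_le]
    rcases hr with h | h <;> constructor <;> linarith [h.1, h.2]
  have hr₀ : r ≠ 0 := by
    rcases hr with h | h
    exacts [h.2.ne, h.1.ne']
  have h_denom : 0 < |r| * |x - y| := mul_pos (abs_pos.2 hr₀) (abs_pos.2 (sub_ne_zero.2 hxy))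
  calc (1 / r) * ((x ^ r - y ^ r) / (x - y)) = (x ^ r - y ^ r) / (r * (x - y)) := by
        rw [div_mul_div_comm, one_mul]
    _ ≤ |x ^ r - y ^ r| / (|r| * |x - y|) := by
        rw [← abs_mul, ← abs_div]
        exact le_abs_self _
    _ ≤ (x * y) ^ ((r - 1) / 2) := (div_le_iff₀ h_denom).2 (abs_rpow_sub_rpow_le hx hy hr₁)
end
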